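/- There is an absolute constant C > 0 such that the following holds. Let a, b ∈ ℝⁿ have nonempty supports A = supp(a) and B = supp(b) and entries bounded in absolute value by c > 0, let ε ∈ (0,1), and let m ≥ C/ε² be an integer. Let h¹,...,hᵐ be mutually independent uniform hash families on {1,...,n}; for each i let j_A^i and j_B^i be the minimizers of hⁱ over A and over B, and Z_i = 1[hⁱ(j_A^i) = hⁱ(j_B^i)] · a[j_A^i] · b[j_B^i]. Define Ũ = m/(∑_{i=1}^{m} min(hⁱ(j_A^i), hⁱ(j_B^i))) − 1 and the estimator F̄ = (Ũ/m) · ∑_{i=1}^{m} Z_i. Then with probability at least 2/3, |F̄ − ⟨a,b⟩| ≤ ε · c² · √(max(|A|,|B|) · |A∩B|). -/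

import Mathlib

open MeasureTheory Finset
open scoped ENNReal


/-- The product measure on `J → ℝ` in which each coordinate is an independent
uniform random variable on `[0,1]`: a uniform hash family on `J`. -/
noncomputable def uniformHash (J : Type*) [Fintype J] : Measure (J → ℝ) :=
  Measure.pi fun _ : J => (volume : Measure ℝ).restrict (Set.Icc 0 1)

/-- The support `{i : x i ≠ 0}` of a vector, as a `Finset`. -/
noncomputable def supp {n : ℕ} (x : Fin n → ℝ) : Finset (Fin n) :=
  Finset.univ.filter fun i => x i ≠ 0

/-- A minimizer of `f` over the nonempty finite set `s` (the minimizer of a uniform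
hash family over a nonempty set is almost surely unique). -/
noncomputable def argminOn {α : Type*} (s : Finset α) (hs : s.Nonempty) (f : α → ℝ) : α :=
  (s.exists_min_image f hs).choose

/-- The MinHash random variable `Z = 1[h(j_A) = h(j_B)] ⬝ a[j_A] ⬝ b[j_B]`, where
`j_A` and `j_B` are the minimizers of the hash `h` over `A` and `B` respectively. -/
noncomputable def Zuw {n : ℕ} (a b : Fin n → ℝ) (A B : Finset (Fin n))
    (hA : A.Nonempty) (hB : B.Nonempty) (h : Fin n → ℝ) : ℝ :=
  (if h (argminOn A hA h) = h (argminOn B hB h) then (1 : ℝ) else 0) *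
    a (argminOn A hA h) * b (argminOn B hB h)

/-- `m` mutually independent uniform hash families on `J`. -/
noncomputable def hashFamilies (m : ℕ) (J : Type*) [Fintype J] :
    Measure (Fin m → J → ℝ) :=
  Measure.pi fun _ : Fin m => uniformHash J

/-!
If the hash values are i.i.d. without atoms, the minimizer over `A ∪ B` is uniform on `A ∪ B`, and
`Z` is `a k * b k` when this minimizer `k` lies in `A ∩ B` and `0` otherwise. Hence `Z` has mean
`⟨a, b⟩ / N` with `N = |A ∪ B|`, and variance at most `c⁴ |A ∩ B| / N`. The minimum of `N` uniform
variables has mean `1 / (N + 1)` and standard deviation at most `1 / (N + 1)`. By Chebyshev, both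
empirical averages are, with constant probability, within `ε / 8` times these bounds on the
standard deviations of their means. The average of the minima, inverted, gives `N` up to a relative
error `O(ε)`; multiplying by the average of `Z` costs `O(ε) c² √(N |A ∩ B|)`, and
`N ≤ 2 max(|A|, |B|)`.
-/

open ProbabilityTheory

section Argmin

variable {α : Type*} {s t : Finset α} (hs : s.Nonempty) (ht : t.Nonempty) (h : α → ℝ)

lemma argminOn_mem : argminOn s hs h ∈ s :=
  (s.exists_min_image h hs).choose_spec.1

lemma isMinOn_argminOn : IsMinOn h s (argminOn s hs h) :=
  (s.exists_min_image h hs).choose_spec.2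

lemma apply_argminOn_eq_inf' : h (argminOn s hs h) = s.inf' hs h :=
  le_antisymm (le_inf' hs h fun _ hj => isMinOn_argminOn hs h hj) (inf'_le h (argminOn_mem hs h))

lemma min_apply_argminOn_eq_inf'_union [DecidableEq α] :
    min (h (argminOn s hs h)) (h (argminOn t ht h)) =
      (s ∪ t).inf' (hs.mono subset_union_left) h := by
  rw [apply_argminOn_eq_inf' hs h, apply_argminOn_eq_inf' ht h, inf'_union]

variable {h}

lemma argminOn_eq_of_isMinOn (hinj : h.Injective) {k : α} (hk : k ∈ s) (hmin : IsMinOn h s k) :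
    argminOn s hs h = k :=
  hinj (le_antisymm (isMinOn_argminOn hs h hk) (hmin (argminOn_mem hs h)))

lemma argminOn_eq_of_subset_of_mem (hinj : h.Injective) (hst : s ⊆ t)
    (hmem : argminOn t ht h ∈ s) : argminOn s hs h = argminOn t ht h :=
  argminOn_eq_of_isMinOn hs hinj hmem ((isMinOn_argminOn ht h).on_subset (coe_subset.2 hst))

lemma apply_argminOn_eq_iff_mem_inter [DecidableEq α] (hinj : h.Injective) :
    h (argminOn s hs h) = h (argminOn t ht h) ↔
      argminOn (s ∪ t) (hs.mono subset_union_left) h ∈ s ∩ t := by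
  have hst : (s ∪ t).Nonempty := hs.mono subset_union_left
  have eq_left := argminOn_eq_of_subset_of_mem hs hst hinj subset_union_left
  have eq_right := argminOn_eq_of_subset_of_mem ht hst hinj subset_union_right
  rw [hinj.eq_iff, mem_inter]
  refine ⟨fun heq => ?_, fun hk => (eq_left hk.1).trans (eq_right hk.2).symm⟩
  rcases mem_union.1 (argminOn_mem hst h) with hk | hk
  · exact ⟨hk, eq_left hk ▸ heq ▸ argminOn_mem ht h⟩
  · exact ⟨eq_right hk ▸ heq ▸ argminOn_mem hs h, hk⟩

lemma Zuw_eq_indicator_argminOn_union {n : ℕ} (a b : Fin n → ℝ) {A B : Finset (Fin n)}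
    (hA : A.Nonempty) (hB : B.Nonempty) {h : Fin n → ℝ} (hinj : h.Injective) :
    Zuw a b A B hA hB h = (↑(A ∩ B) : Set (Fin n)).indicator (fun k => a k * b k)
      (argminOn (A ∪ B) (hA.mono subset_union_left) h) := by
  have hAB : (A ∪ B).Nonempty := hA.mono subset_union_left
  simp only [Zuw, Set.indicator_apply, apply_argminOn_eq_iff_mem_inter hA hB hinj, mem_coe]
  split_ifs with hk
  · obtain ⟨hkA, hkB⟩ := mem_inter.1 hk
    rw [argminOn_eq_of_subset_of_mem hA hAB hinj subset_union_left hkA,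
      argminOn_eq_of_subset_of_mem hB hAB hinj subset_union_right hkB, one_mul]
  · rw [zero_mul, zero_mul]

end Argmin

section IIDProduct

variable {J α : Type*} [Fintype J] [MeasurableSpace α]

lemma measurePreserving_pi_comp_perm (ν : Measure α) [SigmaFinite ν] (σ : Equiv.Perm J) :
    MeasurePreserving (fun h : J → α => h ∘ σ) (Measure.pi fun _ => ν) (Measure.pi fun _ => ν) :=
  measurePreserving_arrowCongr' (fun _ => ν) (fun _ => ν) σ.symm (MeasurableEquiv.refl α)
    fun _ => MeasurePreserving.id ν

lemma ae_injective_pi [MeasurableEq α] (ν : Measure α) [IsProbabilityMeasure ν]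
    [NullSingletonClass ν] : ∀ᵐ h : J → α ∂Measure.pi (fun _ => ν), h.Injective := by
  have ae_ne {i j : J} (hij : i ≠ j) : ∀ᵐ h : J → α ∂Measure.pi (fun _ => ν), h i ≠ h j := by
    have hindep : (fun h : J → α => h i) ⟂ᵢ[Measure.pi fun _ => ν] (fun h => h j) :=
      (iIndepFun_pi (μ := fun _ => ν) (X := fun _ => id) fun _ => aemeasurable_id).indepFun hij
    have heval (k : J) : Measurable fun h : J → α => h k := measurable_pi_apply k
    have hjoint := (indepFun_iff_map_prod_eq_prod_map_map (heval i).aemeasurable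
      (heval j).aemeasurable).1 hindep
    rw [(measurePreserving_eval (fun _ : J => ν) i).map_eq,
      (measurePreserving_eval (fun _ : J => ν) j).map_eq] at hjoint
    have hdiag : ν.prod ν (Set.diagonal α) = 0 := by
      rw [Measure.measure_prod_null measurableSet_diagonal]
      exact .of_forall fun x => by simp [Set.preimage, Set.diagonal]
    rw [← hjoint, Measure.map_apply ((heval i).prodMk (heval j)) measurableSet_diagonal] at hdiag
    exact measure_eq_zero_iff_ae_notMem.1 hdiag
  have ae_pairwise : ∀ᵐ h : J → α ∂Measure.pi (fun _ => ν), ∀ i j, i ≠ j → h i ≠ h j :=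
    ae_all_iff.2 fun i => ae_all_iff.2 fun j => ae_all_iff.2 ae_ne
  filter_upwards [ae_pairwise] with h hne i j
  exact not_imp_not.1 (hne i j)

-- The inequality is strict so as to cover `t = 0`, which occurs for vectors with disjoint supports.
lemma measure_lt_abs_sub_integral_le {Ω : Type*} [MeasurableSpace Ω] {μ : Measure Ω}
    [IsProbabilityMeasure μ] {Y : Ω → ℝ} (hY : MemLp Y 2 μ) {t δ : ℝ} (ht : 0 ≤ t)
    (hvar : Var[Y; μ] ≤ δ * t ^ 2) :
    μ {ω | t < |Y ω - μ[Y]|} ≤ ENNReal.ofReal δ := by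
  rcases ht.eq_or_lt with rfl | ht
  · have hvar_zero : Var[Y; μ] = 0 := le_antisymm (by simpa using hvar) (variance_nonneg Y μ)
    have hnull : μ {ω | 0 < |Y ω - μ[Y]|} = 0 := by
      rw [measure_eq_zero_iff_ae_notMem]
      filter_upwards [ae_eq_integral_of_variance_eq_zero hY hvar_zero] with ω hω
      simp [hω]
    exact hnull.trans_le zero_le
  · calc μ {ω | t < |Y ω - μ[Y]|} ≤ μ {ω | t ≤ |Y ω - μ[Y]|} :=
        measure_mono (Set.ofPred_subset_ofPred.2 fun _ => le_of_lt)
      _ ≤ ENNReal.ofReal (Var[Y; μ] / t ^ 2) := meas_ge_le_variance_div_sq hY ht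
      _ ≤ ENNReal.ofReal δ := ENNReal.ofReal_le_ofReal ((div_le_iff₀ (pow_pos ht 2)).2 hvar)

lemma measure_pi_lt_abs_average_sub_le {Ω : Type*} [MeasurableSpace Ω] {μ : Measure Ω}
    [IsProbabilityMeasure μ] {X : Ω → ℝ} (hX : MemLp X 2 μ) {σ η δ : ℝ} (hσ : 0 ≤ σ) (hη : 0 ≤ η)
    (hvar : Var[X; μ] ≤ σ ^ 2) (hJ : 1 ≤ δ * η ^ 2 * Fintype.card J) :
    Measure.pi (fun _ : J => μ) {ω | η * σ < |(∑ i, X (ω i)) / Fintype.card J - μ[X]|} ≤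
      ENNReal.ofReal δ := by
  have hcard : (Fintype.card J : ℝ) ≠ 0 := by
    rintro h
    simp [h, zero_lt_one.not_ge] at hJ
  have hmem (i : J) : MemLp (fun ω : J → Ω => X (ω i)) 2 (Measure.pi fun _ => μ) :=
    hX.comp_measurePreserving (measurePreserving_eval _ i)
  have hmem_sum : MemLp (fun ω : J → Ω => ∑ i, X (ω i)) 2 (Measure.pi fun _ => μ) :=
    memLp_finsetSum _ fun i _ => hmem i
  have hmem_average : MemLp (fun ω : J → Ω => (∑ i, X (ω i)) / Fintype.card J) 2
      (Measure.pi fun _ => μ) := by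
    simpa only [div_eq_mul_inv] using hmem_sum.mul_const _
  have hmean : ∫ ω : J → Ω, (∑ i, X (ω i)) / Fintype.card J ∂Measure.pi (fun _ => μ) = μ[X] := by
    rw [integral_div, integral_finsetSum _ fun i _ => (hmem i).integrable one_le_two]
    simp [integral_comp_eval (μ := fun _ : J => μ) hX.1, hcard]
  have hvar_sum : Var[fun ω : J → Ω => ∑ i, X (ω i); Measure.pi fun _ => μ] =
      Fintype.card J * Var[X; μ] := by
    have := variance_sum_pi (μ := fun _ : J => μ) (X := fun _ => X) fun _ => hX
    simpa [Finset.sum_fn] using this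
  have hvar_average : Var[fun ω : J → Ω => (∑ i, X (ω i)) / Fintype.card J;
      Measure.pi fun _ => μ] ≤ δ * (η * σ) ^ 2 := by
    calc Var[fun ω : J → Ω => (∑ i, X (ω i)) / Fintype.card J; Measure.pi fun _ => μ]
        = Var[X; μ] / Fintype.card J := by
          simp only [div_eq_mul_inv]
          rw [variance_mul_const, hvar_sum]
          field_simp
      _ ≤ σ ^ 2 * (δ * η ^ 2 * Fintype.card J) / Fintype.card J := by
          gcongr
          exact hvar.trans (le_mul_of_one_le_right (sq_nonneg σ) hJ)
      _ = δ * (η * σ) ^ 2 := by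
          field_simp
  rw [← hmean]
  exact measure_lt_abs_sub_integral_le hmem_average (mul_nonneg hη hσ) hvar_average

end IIDProduct

section UniformArgmin

variable {J : Type*}

/-- The event that a hash family attains its minimum over `s` at `k`. For `k ∈ s` it is almost
surely the event `argminOn s _ h = k`, but unlike that event it is visibly measurable. -/
def minimizerEvent (s : Finset J) (k : J) : Set (J → ℝ) := {h | IsMinOn h s k}

lemma measurableSet_minimizerEvent (s : Finset J) (k : J) :
    MeasurableSet (minimizerEvent s k) := by
  have : minimizerEvent s k = ⋂ j ∈ s, {h | h k ≤ h j} := by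
    ext h
    simp [minimizerEvent, isMinOn_iff]
  rw [this]
  exact s.measurableSet_biInter fun j _ =>
    measurableSet_le (measurable_pi_apply k) (measurable_pi_apply j)

lemma mem_minimizerEvent_iff {s : Finset J} (hs : s.Nonempty) {h : J → ℝ} (hinj : h.Injective)
    {k : J} (hk : k ∈ s) : h ∈ minimizerEvent s k ↔ argminOn s hs h = k :=
  ⟨argminOn_eq_of_isMinOn hs hinj hk, fun heq => heq ▸ isMinOn_argminOn hs h⟩

variable [Fintype J] (ν : Measure ℝ) [IsProbabilityMeasure ν]

lemma measureReal_minimizerEvent_eq {s : Finset J} {k l : J} (hk : k ∈ s) (hl : l ∈ s) :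
    (Measure.pi fun _ => ν).real (minimizerEvent s k) =
      (Measure.pi fun _ => ν).real (minimizerEvent s l) := by
  classical
  have hpre : (fun h : J → ℝ => h ∘ Equiv.swap k l) ⁻¹' minimizerEvent s l =
      minimizerEvent s k := by
    have hswap := Equiv.swap_bijOn_self (s := (s : Set J)) (iff_of_true hk hl)
    ext h
    simpa [minimizerEvent, isMinOn_iff] using
      (hswap.forall (p := fun j => h k ≤ h j)).symm
  rw [← hpre, (measurePreserving_pi_comp_perm ν _).measureReal_preimage
    (measurableSet_minimizerEvent s l).nullMeasurableSet]

variable [NullSingletonClass ν] {s : Finset J} (hs : s.Nonempty)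

lemma measureReal_minimizerEvent {k : J} (hk : k ∈ s) :
    (Measure.pi fun _ => ν).real (minimizerEvent s k) = 1 / #s := by
  have hdisj : (s : Set J).Pairwise
      (Function.onFun (AEDisjoint (Measure.pi fun _ => ν)) (minimizerEvent s)) := by
    intro i hi j hj hij
    refine measure_eq_zero_iff_ae_notMem.2 ?_
    filter_upwards [ae_injective_pi ν] with h hinj hmem
    exact hij (((mem_minimizerEvent_iff ⟨k, hk⟩ hinj hi).1 hmem.1).symm.trans
      ((mem_minimizerEvent_iff ⟨k, hk⟩ hinj hj).1 hmem.2))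
  have hcover : ⋃ j ∈ s, minimizerEvent s j = Set.univ :=
    Set.eq_univ_of_forall fun h =>
      Set.mem_biUnion (argminOn_mem ⟨k, hk⟩ h) (isMinOn_argminOn ⟨k, hk⟩ h)
  have htotal : #s * (Measure.pi fun _ => ν).real (minimizerEvent s k) = 1 := by
    calc #s * (Measure.pi fun _ => ν).real (minimizerEvent s k)
        = ∑ j ∈ s, (Measure.pi fun _ => ν).real (minimizerEvent s j) := by
          rw [sum_congr rfl fun j hj => measureReal_minimizerEvent_eq ν hj hk, sum_const,
            nsmul_eq_mul]
      _ = (Measure.pi fun _ => ν).real (⋃ j ∈ s, minimizerEvent s j) :=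
          (measureReal_biUnion_finset₀ hdisj fun j _ =>
            (measurableSet_minimizerEvent s j).nullMeasurableSet).symm
      _ = 1 := by rw [hcover, probReal_univ]
  exact eq_one_div_of_mul_eq_one_right htotal

lemma comp_argminOn_ae_eq (f : J → ℝ) :
    (fun h => f (argminOn s hs h)) =ᵐ[Measure.pi fun _ => ν]
      fun h => ∑ k ∈ s, (minimizerEvent s k).indicator (fun _ => f k) h := by
  classical
  filter_upwards [ae_injective_pi ν] with h hinj
  calc f (argminOn s hs h) = ∑ k ∈ s, if argminOn s hs h = k then f k else 0 := by
        rw [sum_ite_eq, if_pos (argminOn_mem hs h)]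
    _ = ∑ k ∈ s, (minimizerEvent s k).indicator (fun _ => f k) h :=
        sum_congr rfl fun k hk => by
          simp only [Set.indicator_apply, mem_minimizerEvent_iff hs hinj hk]

lemma memLp_comp_argminOn (f : J → ℝ) {p : ℝ≥0∞} :
    MemLp (fun h => f (argminOn s hs h)) p (Measure.pi fun _ => ν) :=
  (memLp_congr_ae (comp_argminOn_ae_eq ν hs f)).2 <| memLp_finsetSum _ fun k _ =>
    (memLp_const (f k)).indicator (measurableSet_minimizerEvent s k)

lemma integral_comp_argminOn (f : J → ℝ) :
    ∫ h, f (argminOn s hs h) ∂Measure.pi (fun _ => ν) = (∑ k ∈ s, f k) / #s := by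
  rw [integral_congr_ae (comp_argminOn_ae_eq ν hs f), integral_finsetSum _ fun k _ =>
    (integrable_const (f k)).indicator (measurableSet_minimizerEvent s k), sum_div]
  refine sum_congr rfl fun k hk => ?_
  rw [integral_indicator_const _ (measurableSet_minimizerEvent s k),
    measureReal_minimizerEvent ν hk, smul_eq_mul, one_div_mul_eq_div]

section Zuw

variable {n : ℕ} (a b : Fin n → ℝ) {A B : Finset (Fin n)} (hA : A.Nonempty) (hB : B.Nonempty)

lemma Zuw_ae_eq_comp_argminOn : Zuw a b A B hA hB =ᵐ[Measure.pi fun _ => ν] fun h =>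
    (↑(A ∩ B) : Set (Fin n)).indicator (fun k => a k * b k)
      (argminOn (A ∪ B) (hA.mono subset_union_left) h) := by
  filter_upwards [ae_injective_pi ν] with h hinj
  exact Zuw_eq_indicator_argminOn_union a b hA hB hinj

lemma memLp_Zuw {p : ℝ≥0∞} : MemLp (Zuw a b A B hA hB) p (Measure.pi fun _ => ν) :=
  (memLp_congr_ae (Zuw_ae_eq_comp_argminOn ν a b hA hB)).2 (memLp_comp_argminOn ν _ _)

lemma integral_Zuw : ∫ h, Zuw a b A B hA hB h ∂Measure.pi (fun _ => ν) =
    (∑ k ∈ A ∩ B, a k * b k) / #(A ∪ B) := by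
  rw [integral_congr_ae (Zuw_ae_eq_comp_argminOn ν a b hA hB), integral_comp_argminOn,
    sum_indicator_subset _ inter_subset_union]

lemma variance_Zuw_le {K : ℝ} (hK : ∀ k ∈ A ∩ B, |a k * b k| ≤ K) :
    Var[Zuw a b A B hA hB; Measure.pi fun _ => ν] ≤ K ^ 2 * (#(A ∩ B) / #(A ∪ B)) := by
  set f : Fin n → ℝ := (↑(A ∩ B) : Set (Fin n)).indicator fun k => a k * b k
  have hAB : (A ∪ B).Nonempty := hA.mono subset_union_left
  calc Var[Zuw a b A B hA hB; Measure.pi fun _ => ν]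
      = Var[fun h => f (argminOn (A ∪ B) hAB h); Measure.pi fun _ => ν] :=
        variance_congr (Zuw_ae_eq_comp_argminOn ν a b hA hB)
    _ ≤ ∫ h, f (argminOn (A ∪ B) hAB h) ^ 2 ∂Measure.pi (fun _ => ν) :=
        variance_le_expectation_sq (memLp_comp_argminOn ν hAB f (p := 2)).1
    _ = (∑ k ∈ A ∪ B, f k ^ 2) / #(A ∪ B) :=
        integral_comp_argminOn ν hAB fun k => f k ^ 2
    _ = (∑ k ∈ A ∩ B, (a k * b k) ^ 2) / #(A ∪ B) := by
        have hsq (k : Fin n) : f k ^ 2 =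
            (↑(A ∩ B) : Set (Fin n)).indicator (fun k => (a k * b k) ^ 2) k := by
          simp [f, Set.indicator_apply]
        rw [sum_congr rfl fun k _ => hsq k, sum_indicator_subset _ inter_subset_union]
    _ ≤ #(A ∩ B) • K ^ 2 / #(A ∪ B) := by
        gcongr
        exact sum_le_card_nsmul _ _ _ fun k hk => sq_le_sq' (neg_le_of_abs_le (hK k hk))
          (le_of_abs_le (hK k hk))
    _ = K ^ 2 * (#(A ∩ B) / #(A ∪ B)) := by rw [nsmul_eq_mul]; ring

end Zuw

end UniformArgmin

section UniformMin

variable {J : Type*}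

lemma measurable_inf' {s : Finset J} (hs : s.Nonempty) :
    Measurable fun h : J → ℝ => s.inf' hs h := by
  have hinf : (fun h : J → ℝ => s.inf' hs h) = s.inf' hs fun j h => h j :=
    funext fun h => (Finset.inf'_apply hs (fun j (h : J → ℝ) => h j) h).symm
  rw [hinf]
  exact inf'_induction hs _ (fun _ hf _ hg => hf.inf hg) fun j _ => measurable_pi_apply j

variable [Fintype J]

instance isProbabilityMeasure_restrict_Icc_zero_one :
    IsProbabilityMeasure ((volume : Measure ℝ).restrict (Set.Icc 0 1)) :=
  ⟨by simp⟩

instance uniformHash.instIsProbabilityMeasure : IsProbabilityMeasure (uniformHash J) := by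
  unfold uniformHash
  infer_instance

variable {s : Finset J} (hs : s.Nonempty)

lemma ae_inf'_mem_Icc : ∀ᵐ h ∂uniformHash J, s.inf' hs h ∈ Set.Icc (0 : ℝ) 1 := by
  have hcoord (j : J) : ∀ᵐ h ∂uniformHash J, h j ∈ Set.Icc (0 : ℝ) 1 :=
    (measurePreserving_eval _ j).quasiMeasurePreserving.ae (ae_restrict_mem measurableSet_Icc)
  filter_upwards [ae_all_iff.2 hcoord] with h hh
  obtain ⟨j, -, hj⟩ := s.exists_mem_eq_inf' hs h
  exact hj ▸ hh j

lemma measureReal_lt_inf' {t : ℝ} (ht : t ∈ Set.Icc (0 : ℝ) 1) :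
    (uniformHash J).real {h | t < s.inf' hs h} = (1 - t) ^ #s := by
  classical
  have hbox : {h : J → ℝ | t < s.inf' hs h} =
      Set.univ.pi fun j => if j ∈ s then Set.Ioi t else Set.univ := by
    ext h
    simp only [Set.mem_ofPred_eq, lt_inf'_iff, Set.mem_pi, Set.mem_univ, true_imp_iff]
    refine forall_congr' fun j => ?_
    by_cases hj : j ∈ s <;> simp [hj]
  have hside : (volume.restrict (Set.Icc (0 : ℝ) 1)).real (Set.Ioi t) = 1 - t := by
    have : Set.Ioi t ∩ Set.Icc 0 1 = Set.Ioc t 1 := by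
      ext x
      grind
    rw [measureReal_restrict_apply measurableSet_Ioi, this, Real.volume_real_Ioc_of_le ht.2]
  calc (uniformHash J).real {h | t < s.inf' hs h}
      = ∏ j, (volume.restrict (Set.Icc (0 : ℝ) 1)).real
          (if j ∈ s then Set.Ioi t else Set.univ) := by
        rw [hbox, uniformHash, measureReal_def, Measure.pi_pi, ENNReal.toReal_prod]
        rfl
    _ = ∏ j, if j ∈ s then 1 - t else 1 := by simp only [apply_ite, hside, probReal_univ]
    _ = (1 - t) ^ #s := by rw [Fintype.prod_ite_mem, prod_const]

lemma measureReal_le_one_sub_inf'_pow {p : ℕ} (hp : p ≠ 0) {t : ℝ} (ht : t ∈ Set.Icc (0 : ℝ) 1) :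
    (uniformHash J).real {h | t ≤ (1 - s.inf' hs h) ^ p} = 1 - t ^ (#s / p : ℝ) := by
  set r := t ^ (p⁻¹ : ℝ)
  have hr : r ∈ Set.Icc (0 : ℝ) 1 :=
    ⟨Real.rpow_nonneg ht.1 _, Real.rpow_le_one ht.1 ht.2 (by positivity)⟩
  set E : Set (J → ℝ) := {h | 1 - r < s.inf' hs h}
  have hE : MeasurableSet E := measurableSet_lt measurable_const (measurable_inf' hs)
  have hcompl : ∀ᵐ h ∂uniformHash J, h ∈ {h | t ≤ (1 - s.inf' hs h) ^ p} ↔ h ∈ Eᶜ := by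
    filter_upwards [ae_inf'_mem_Icc hs] with h hh
    have hroot : r ≤ 1 - s.inf' hs h ↔ t ≤ (1 - s.inf' hs h) ^ p := by
      rw [← Real.rpow_natCast]
      exact Real.rpow_inv_le_iff_of_pos ht.1 (sub_nonneg.2 hh.2) (by positivity)
    rw [← hroot, le_sub_comm, Set.mem_compl_iff, Set.mem_ofPred_eq, not_lt]
  rw [measureReal_congr (Filter.eventuallyEq_set.2 hcompl), probReal_compl_eq_one_sub hE,
    measureReal_lt_inf' hs ⟨sub_nonneg.2 hr.2, sub_le_self 1 hr.1⟩, sub_sub_cancel,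
    ← Real.rpow_mul_natCast ht.1, inv_mul_eq_div]

-- `1 - min` has distribution function `x ↦ x ^ #s`, so its moments, unlike those of `min`, are
-- single power integrals.
lemma integral_one_sub_inf'_pow {p : ℕ} (hp : p ≠ 0) :
    ∫ h, (1 - s.inf' hs h) ^ p ∂uniformHash J = #s / (#s + p) := by
  have hmeas : Measurable fun h : J → ℝ => (1 - s.inf' hs h) ^ p :=
    (measurable_const.sub (measurable_inf' hs)).pow_const p
  have hmem : ∀ᵐ h ∂uniformHash J, (1 - s.inf' hs h) ^ p ∈ Set.Icc (0 : ℝ) 1 := by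
    filter_upwards [ae_inf'_mem_Icc hs] with h hh
    exact ⟨pow_nonneg (sub_nonneg.2 hh.2) p,
      pow_le_one₀ (sub_nonneg.2 hh.2) (sub_le_self 1 hh.1)⟩
  have hexp : (-1 : ℝ) < #s / p := neg_one_lt_zero.trans_le (by positivity)
  calc ∫ h, (1 - s.inf' hs h) ^ p ∂uniformHash J
      = ∫ t in Set.Ioc 0 1, (uniformHash J).real {h | t ≤ (1 - s.inf' hs h) ^ p} :=
        (Integrable.of_mem_Icc 0 1 hmeas.aemeasurable hmem).integral_eq_integral_Ioc_meas_le
          (hmem.mono fun _ hh => hh.1) (hmem.mono fun _ hh => hh.2)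
    _ = ∫ t in (0 : ℝ)..1, 1 - t ^ (#s / p : ℝ) := by
        rw [intervalIntegral.integral_of_le zero_le_one]
        exact setIntegral_congr_fun measurableSet_Ioc fun t ht =>
          measureReal_le_one_sub_inf'_pow hs hp (Set.Ioc_subset_Icc_self ht)
    _ = 1 - 1 / (#s / p + 1) := by
        rw [intervalIntegral.integral_sub intervalIntegrable_const
          (intervalIntegral.intervalIntegrable_rpow' hexp), integral_rpow (.inl hexp),
          Real.one_rpow, Real.zero_rpow (neg_lt_iff_pos_add.1 hexp).ne']
        simp
    _ = #s / (#s + p) := by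
        field_simp
        ring

lemma memLp_inf' {p : ℝ≥0∞} : MemLp (fun h => s.inf' hs h) p (uniformHash J) :=
  memLp_of_bounded (ae_inf'_mem_Icc hs) (measurable_inf' hs).aestronglyMeasurable p

lemma integral_inf' : ∫ h, s.inf' hs h ∂uniformHash J = 1 / (#s + 1) := by
  have hint := (memLp_inf' hs (p := 1)).integrable le_rfl
  have hmoment := integral_one_sub_inf'_pow hs one_ne_zero
  simp only [pow_one, integral_sub (integrable_const 1) hint, integral_const, probReal_univ,
    one_smul, Nat.cast_one] at hmoment
  field_simp at hmoment ⊢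
  linarith

lemma variance_inf'_le : Var[fun h => s.inf' hs h; uniformHash J] ≤ (1 / (#s + 1)) ^ 2 := by
  have hmem : MemLp (fun h => 1 - s.inf' hs h) 2 (uniformHash J) :=
    (memLp_const 1).sub (memLp_inf' hs)
  have hmean := integral_one_sub_inf'_pow hs one_ne_zero
  simp only [pow_one] at hmean
  rw [← variance_const_sub (measurable_inf' hs).aestronglyMeasurable 1, variance_eq_sub hmem]
  simp only [Pi.pow_apply]
  rw [integral_one_sub_inf'_pow hs two_ne_zero, hmean]
  push_cast
  calc (#s : ℝ) / (#s + 2) - ((#s : ℝ) / (#s + 1)) ^ 2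
      = (#s : ℝ) / (#s + 2) * (1 / (#s + 1)) ^ 2 := by
        field_simp
        ring
    _ ≤ 1 * (1 / ((#s : ℝ) + 1)) ^ 2 := by
        gcongr
        exact div_le_one_of_le₀ (by linarith) (by positivity)
    _ = (1 / ((#s : ℝ) + 1)) ^ 2 := one_mul _

end UniformMin

section Perturbation

lemma abs_inv_sub_one_sub_le {N w η : ℝ} (hN : 1 ≤ N) (hη : η ≤ 1 / 3)
    (hw : |w - 1 / (N + 1)| ≤ η * (1 / (N + 1))) : |w⁻¹ - 1 - N| ≤ 3 * η * N := by
  have hN_pos : 0 < N + 1 := by linarith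
  set s := (N + 1) * w with hs_def
  have hs : |1 - s| ≤ η := by
    calc |1 - s| = |(N + 1) * (w - 1 / (N + 1))| := by
          rw [abs_sub_comm, mul_sub, mul_one_div_cancel hN_pos.ne']
      _ = (N + 1) * |w - 1 / (N + 1)| := by rw [abs_mul, abs_of_pos hN_pos]
      _ ≤ (N + 1) * (η * (1 / (N + 1))) := by gcongr
      _ = η := by field_simp
  have hs_ge : 2 / 3 ≤ s := by linarith [le_of_abs_le hs]
  have hs_pos : 0 < s := by linarith
  have hw_ne : w ≠ 0 := right_ne_zero_of_mul hs_pos.ne'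
  calc |w⁻¹ - 1 - N| = |(N + 1) * (1 - s) / s| := by
        congr 1
        rw [hs_def]
        field_simp
        ring
    _ = (N + 1) * |1 - s| / s := by rw [abs_div, abs_mul, abs_of_pos hN_pos, abs_of_pos hs_pos]
    _ ≤ (N + N) * η / (2 / 3) := by
        have hη_nonneg : 0 ≤ η := (abs_nonneg _).trans hs
        gcongr
    _ = 3 * η * N := by ring

lemma abs_mul_sub_le {N V z μ η K k : ℝ} (hN : 0 < N) (hη : 0 ≤ η) (hη' : η ≤ 1 / 3)
    (hK : 0 ≤ K) (hk : 0 ≤ k) (hkN : k ≤ N) (hV : |V - N| ≤ 3 * η * N)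
    (hz : |z - μ / N| ≤ η * (K * √(k / N))) (hμ : |μ| ≤ K * k) :
    |V * z - μ| ≤ 5 * η * K * √(N * k) := by
  have hV_le : |V| ≤ 2 * N := by
    have := abs_le.1 hV
    exact abs_le.2 ⟨by nlinarith, by nlinarith⟩
  have hsqrt_div : N * √(k / N) = √(N * k) := by
    rw [Real.sqrt_div hk, Real.sqrt_mul hN.le, mul_div_left_comm, Real.div_sqrt, mul_comm]
  have hk_le : k ≤ √(N * k) := Real.le_sqrt_of_sq_le (by nlinarith)
  calc |V * z - μ| = |V * (z - μ / N) + (V - N) * (μ / N)| := by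
        congr 1
        field_simp
        ring
    _ ≤ |V| * |z - μ / N| + |V - N| * (|μ| / N) := by
        simpa only [abs_mul, abs_div, abs_of_pos hN] using
          abs_add_le (V * (z - μ / N)) ((V - N) * (μ / N))
    _ ≤ 2 * N * (η * (K * √(k / N))) + 3 * η * N * (K * k / N) := by gcongr
    _ = 2 * η * K * (N * √(k / N)) + 3 * η * K * k := by
        field_simp
    _ ≤ 2 * η * K * √(N * k) + 3 * η * K * √(N * k) := by
        rw [hsqrt_div]
        gcongr
    _ = 5 * η * K * √(N * k) := by ring

end Perturbation

section Estimator

lemma sqrt_card_union_mul_le {α : Type*} [DecidableEq α] (A B : Finset α) {k : ℝ} (hk : 0 ≤ k) :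
    √(#(A ∪ B) * k) ≤ 3 / 2 * √(max (#A : ℝ) #B * k) := by
  have hunion : (#(A ∪ B) : ℝ) ≤ #A + #B := mod_cast card_union_le A B
  have hmax : (#(A ∪ B) : ℝ) ≤ (3 / 2) ^ 2 * max (#A : ℝ) #B := by
    linarith [le_max_left (#A : ℝ) #B, le_max_right (#A : ℝ) #B,
      (Nat.cast_nonneg #A).trans (le_max_left (#A : ℝ) #B)]
  calc √(#(A ∪ B) * k) ≤ √((3 / 2) ^ 2 * (max (#A : ℝ) #B * k)) := by
        rw [← mul_assoc]
        gcongr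
    _ = 3 / 2 * √(max (#A : ℝ) #B * k) := by
        rw [Real.sqrt_mul (by positivity), Real.sqrt_sq (by norm_num)]

lemma abs_inv_sub_one_mul_sub_sum_le {α : Type*} [DecidableEq α] {A B : Finset α}
    (hA : A.Nonempty) {f : α → ℝ} {K ε w z : ℝ} (hK : 0 ≤ K) (hf : ∀ k ∈ A ∩ B, |f k| ≤ K)
    (hε : 0 ≤ ε) (hε1 : ε ≤ 1) (hw : |w - 1 / (#(A ∪ B) + 1)| ≤ ε / 8 * (1 / (#(A ∪ B) + 1)))
    (hz : |z - (∑ k ∈ A ∩ B, f k) / #(A ∪ B)| ≤ ε / 8 * (K * √(#(A ∩ B) / #(A ∪ B)))) :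
    |(w⁻¹ - 1) * z - ∑ k ∈ A ∩ B, f k| ≤ ε * K * √(max (#A : ℝ) #B * #(A ∩ B)) := by
  have hN : (1 : ℝ) ≤ #(A ∪ B) := mod_cast (hA.mono subset_union_left).card_pos
  have hkN : (#(A ∩ B) : ℝ) ≤ #(A ∪ B) := mod_cast card_le_card inter_subset_union
  have hsum : |∑ k ∈ A ∩ B, f k| ≤ K * #(A ∩ B) := by
    calc |∑ k ∈ A ∩ B, f k| ≤ ∑ k ∈ A ∩ B, |f k| := abs_sum_le_sum_abs _ _
      _ ≤ #(A ∩ B) • K := sum_le_card_nsmul _ _ _ hf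
      _ = K * #(A ∩ B) := by rw [nsmul_eq_mul, mul_comm]
  have hη : ε / 8 ≤ 1 / 3 := by linarith
  calc |(w⁻¹ - 1) * z - ∑ k ∈ A ∩ B, f k|
      ≤ 5 * (ε / 8) * K * √(#(A ∪ B) * #(A ∩ B)) :=
        abs_mul_sub_le (zero_lt_one.trans_le hN) (by positivity) hη hK (Nat.cast_nonneg _) hkN
          (abs_inv_sub_one_sub_le hN hη hw) hz hsum
    _ ≤ 5 * (ε / 8) * K * (3 / 2 * √(max (#A : ℝ) #B * #(A ∩ B))) := by
        gcongr
        exact sqrt_card_union_mul_le A B (Nat.cast_nonneg _)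
    _ = 15 / 16 * (ε * K * √(max (#A : ℝ) #B * #(A ∩ B))) := by ring
    _ ≤ ε * K * √(max (#A : ℝ) #B * #(A ∩ B)) :=
        mul_le_of_le_one_left (by positivity) (by norm_num)

lemma sum_supp_inter_mul {n : ℕ} (a b : Fin n → ℝ) :
    ∑ k ∈ supp a ∩ supp b, a k * b k = ∑ k, a k * b k :=
  sum_subset (subset_univ _) fun k _ hk => by
    simpa [supp, or_iff_not_imp_left] using hk

instance hashFamilies.instIsProbabilityMeasure {m : ℕ} {J : Type*} [Fintype J] :
    IsProbabilityMeasure (hashFamilies m J) := by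
  unfold hashFamilies
  infer_instance

lemma hashFamilies_lt_abs_average_min_sub_le {m : ℕ} {J : Type*} [Fintype J] [DecidableEq J]
    {A B : Finset J} (hA : A.Nonempty) (hB : B.Nonempty) {η δ : ℝ} (hη : 0 ≤ η)
    (hm : 1 ≤ δ * η ^ 2 * m) :
    hashFamilies m J {H | η * (1 / (#(A ∪ B) + 1)) <
      |(∑ i, min (H i (argminOn A hA (H i))) (H i (argminOn B hB (H i)))) / m -
        1 / (#(A ∪ B) + 1)|} ≤ ENNReal.ofReal δ := by
  have hAB : (A ∪ B).Nonempty := hA.mono subset_union_left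
  simpa [min_apply_argminOn_eq_inf'_union, integral_inf', hashFamilies] using
    measure_pi_lt_abs_average_sub_le (J := Fin m) (memLp_inf' hAB) (by positivity) hη
      (variance_inf'_le hAB) (by simpa using hm)

lemma hashFamilies_lt_abs_average_Zuw_sub_le {m n : ℕ} (a b : Fin n → ℝ) {A B : Finset (Fin n)}
    (hA : A.Nonempty) (hB : B.Nonempty) {K η δ : ℝ} (hK : 0 ≤ K)
    (hab : ∀ k ∈ A ∩ B, |a k * b k| ≤ K) (hη : 0 ≤ η) (hm : 1 ≤ δ * η ^ 2 * m) :
    hashFamilies m (Fin n) {H | η * (K * √(#(A ∩ B) / #(A ∪ B))) <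
      |(∑ i, Zuw a b A B hA hB (H i)) / m - (∑ k ∈ A ∩ B, a k * b k) / #(A ∪ B)|} ≤
        ENNReal.ofReal δ := by
  have hvar : Var[Zuw a b A B hA hB; uniformHash (Fin n)] ≤
      (K * √(#(A ∩ B) / #(A ∪ B))) ^ 2 := by
    rw [mul_pow, Real.sq_sqrt (by positivity)]
    exact variance_Zuw_le _ a b hA hB hab
  have hmean : ∫ h, Zuw a b A B hA hB h ∂uniformHash (Fin n) =
      (∑ k ∈ A ∩ B, a k * b k) / #(A ∪ B) := integral_Zuw _ a b hA hB
  have hmem : MemLp (Zuw a b A B hA hB) 2 (uniformHash (Fin n)) := memLp_Zuw _ a b hA hB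
  simpa [hmean, hashFamilies] using
    measure_pi_lt_abs_average_sub_le (J := Fin m) hmem (by positivity) hη hvar (by simpa using hm)

theorem minhash_estimator_general {n : ℕ} (a b : Fin n → ℝ) {A B : Finset (Fin n)}
    (hA : A.Nonempty) (hB : B.Nonempty) {K : ℝ} (hK : 0 ≤ K)
    (hab : ∀ k ∈ A ∩ B, |a k * b k| ≤ K) {ε δ : ℝ} (hε : 0 < ε) (hε1 : ε ≤ 1) (hδ : 0 < δ)
    {m : ℕ} (hm : 128 / (δ * ε ^ 2) ≤ m) :
    1 - ENNReal.ofReal δ ≤ hashFamilies m (Fin n) {H |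
      |((m / (∑ i, min (H i (argminOn A hA (H i))) (H i (argminOn B hB (H i)))) - 1) / m) *
          (∑ i, Zuw a b A B hA hB (H i)) - ∑ k ∈ A ∩ B, a k * b k| ≤
        ε * K * √(max (#A : ℝ) #B * #(A ∩ B))} := by
  set S : (Fin m → Fin n → ℝ) → ℝ := fun H =>
    ∑ i, min (H i (argminOn A hA (H i))) (H i (argminOn B hB (H i)))
  set T : (Fin m → Fin n → ℝ) → ℝ := fun H => ∑ i, Zuw a b A B hA hB (H i)
  set P := hashFamilies m (Fin n)
  set good := {H | |((m / S H - 1) / m) * T H - ∑ k ∈ A ∩ B, a k * b k| ≤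
    ε * K * √(max (#A : ℝ) #B * #(A ∩ B))}
  set badS := {H | ε / 8 * (1 / (#(A ∪ B) + 1)) < |S H / m - 1 / (#(A ∪ B) + 1)|}
  set badT := {H | ε / 8 * (K * √(#(A ∩ B) / #(A ∪ B))) <
    |T H / m - (∑ k ∈ A ∩ B, a k * b k) / #(A ∪ B)|}
  have hm_half : 1 ≤ δ / 2 * (ε / 8) ^ 2 * m := by
    rw [div_le_iff₀ (by positivity)] at hm
    linarith
  have hcover : Set.univ ⊆ good ∪ (badS ∪ badT) := by
    rintro H -
    refine or_iff_not_imp_right.2 fun hH => ?_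
    simp only [badS, badT, Set.mem_union, Set.mem_ofPred_eq, not_or, not_lt] at hH
    have hgood := abs_inv_sub_one_mul_sub_sum_le hA hK hab hε.le hε1 hH.1 hH.2
    rwa [inv_div, mul_div_assoc', mul_div_right_comm] at hgood
  refine tsub_le_iff_right.2 ?_
  calc 1 = P Set.univ := measure_univ.symm
    _ ≤ P good + (P badS + P badT) := (measure_mono hcover).trans <|
        (measure_union_le _ _).trans (add_le_add_right (measure_union_le _ _) _)
    _ ≤ P good + (ENNReal.ofReal (δ / 2) + ENNReal.ofReal (δ / 2)) := by
        gcongr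
        · exact hashFamilies_lt_abs_average_min_sub_le hA hB (by positivity) hm_half
        · exact hashFamilies_lt_abs_average_Zuw_sub_le a b hA hB hK hab (by positivity) hm_half
    _ = P good + ENNReal.ofReal δ := by
        rw [← ENNReal.ofReal_add (by positivity) (by positivity), add_halves]

end Estimator

/-- There is an absolute constant `C > 0` such that for vectors `a, b ∈ ℝⁿ` with nonempty
supports `A`, `B` and entries bounded by `c > 0`, `ε ∈ (0,1)`, an integer `m ≥ C/ε²`, and
mutually independent uniform hash families `h¹,...,hᵐ`, the unweighted MinHash estimator
`F̄ = (Ũ/m) ∑ᵢ Zᵢ` with `Ũ = m / (∑ᵢ min(hⁱ(j_Aⁱ), hⁱ(j_Bⁱ))) - 1` satisfies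
`|F̄ - ⟨a,b⟩| ≤ ε c² √(max(|A|,|B|) |A ∩ B|)` with probability at least `2/3`. -/
theorem minhash_estimator :
    ∃ C : ℝ, 0 < C ∧
      ∀ (n : ℕ) (a b : Fin n → ℝ) (c : ℝ), 0 < c →
      (∀ i, |a i| ≤ c) → (∀ i, |b i| ≤ c) →
      ∀ (hA : (supp a).Nonempty) (hB : (supp b).Nonempty),
      ∀ ε : ℝ, ε ∈ Set.Ioo (0 : ℝ) 1 →
      ∀ m : ℕ, C / ε ^ 2 ≤ (m : ℝ) →
        (2 : ℝ≥0∞) / 3 ≤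
          hashFamilies m (Fin n)
            {H : Fin m → Fin n → ℝ |
              |(((m : ℝ) / (∑ i, min (H i (argminOn (supp a) hA (H i)))
                      (H i (argminOn (supp b) hB (H i)))) - 1) / m) *
                  (∑ i, Zuw a b (supp a) (supp b) hA hB (H i)) - ∑ k, a k * b k|
                ≤ ε * c ^ 2 *
                    Real.sqrt (max ((supp a).card : ℝ) ((supp b).card : ℝ) *
                      ((supp a ∩ supp b).card : ℝ))} := by
  refine ⟨384, by norm_num, fun n a b c hc ha hb hA hB ε hε m hm => ?_⟩
  have hab (k : Fin n) : |a k * b k| ≤ c ^ 2 := by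
    rw [abs_mul, sq]
    exact mul_le_mul (ha k) (hb k) (abs_nonneg _) hc.le
  have hδ : (2 : ℝ≥0∞) / 3 = 1 - ENNReal.ofReal (1 / 3) := by
    rw [← ENNReal.ofReal_one, ← ENNReal.ofReal_sub _ (by norm_num),
      ← ENNReal.ofReal_ofNat 2, ← ENNReal.ofReal_ofNat 3, ← ENNReal.ofReal_div_of_pos three_pos]
    norm_num
  rw [hδ, ← sum_supp_inter_mul]
  exact minhash_estimator_general a b hA hB (sq_nonneg c) (fun k _ => hab k) hε.1 hε.2.le
    (by norm_num) (by convert hm using 1; field_simp; norm_num)
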